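/- Let S and A be nonempty finite sets, T ≥ 1, B ≥ 1, γ ∈ [0,1), P a transition kernel on S×A, ρ a probability distribution on S, and r : S×A → [0,1]. For θ ∈ ℝ^{S×A}, consider the unregularized (λ = 0) single-trajectory REINFORCE vector u_θ and batch estimator ĝ_θ, and let Ē(θ) = Σ_{z∈(S×A)^T} ν(θ;z)·u_θ(z). Then for every θ, Σ_{z∈((S×A)^T)^B} ( ∏_{b=1}^B ν(θ; z_b) )·‖ĝ_θ(z) − Ē(θ)‖₂⁴ ≤ 1120 / ( B²·(1−γ)⁸ ). -/

import Mathlib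

open scoped BigOperators

/-- The softmax policy `π_θ(a|s) = exp θ(s,a) / Σ_{a'} exp θ(s,a')`. -/
noncomputable def softmax {S A : Type*} [Fintype A] (θ : S × A → ℝ) (s : S) (a : A) : ℝ :=
  Real.exp (θ (s, a)) / ∑ a' : A, Real.exp (θ (s, a'))

/-- The score vector `∇ log π_θ(a|s) ∈ ℝ^{S×A}`. -/
noncomputable def score {S A : Type*} [Fintype A] [DecidableEq S] [DecidableEq A]
    (θ : S × A → ℝ) (s : S) (a : A) : S × A → ℝ :=
  fun p => if p.1 = s then (if p.2 = a then (1 : ℝ) else 0) - softmax θ p.1 p.2 else 0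

/-- The truncated-trajectory distribution
`ν(θ; z) = ρ(s⁰) π_θ(a⁰|s⁰) ∏_{t=1}^{T-1} P(s^t|s^{t-1},a^{t-1}) π_θ(a^t|s^t)`. -/
noncomputable def trajDist {S A : Type*} [Fintype A] {T : ℕ}
    (P : S → A → S → ℝ) (ρ : S → ℝ) (θ : S × A → ℝ) (z : Fin T → S × A) : ℝ :=
  ∏ t : Fin T,
    (if (t : ℕ) = 0 then ρ (z t).1
      else
        P (z ⟨(t : ℕ) - 1, lt_of_le_of_lt (Nat.sub_le _ _) t.isLt⟩).1
          (z ⟨(t : ℕ) - 1, lt_of_le_of_lt (Nat.sub_le _ _) t.isLt⟩).2 (z t).1) *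
      softmax θ (z t).1 (z t).2

/-- The single-trajectory (entropy-regularized) REINFORCE vector
`u_θ(z) = Σ_{t<T} γ^t (Σ_{ℓ≤t} ∇log π_θ(a^ℓ|s^ℓ)) (r(s^t,a^t) - λ log π_θ(a^t|s^t))`. -/
noncomputable def reinforce {S A : Type*} [Fintype S] [Fintype A] [DecidableEq S]
    [DecidableEq A] {T : ℕ} (γ lam : ℝ) (r : S → A → ℝ) (θ : S × A → ℝ)
    (z : Fin T → S × A) : S × A → ℝ :=
  ∑ t : Fin T,
    (γ ^ (t : ℕ) * (r (z t).1 (z t).2 - lam * Real.log (softmax θ (z t).1 (z t).2))) •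
      ∑ l : Fin T, if (l : ℕ) ≤ (t : ℕ) then score θ (z l).1 (z l).2 else 0

/-- The batch REINFORCE estimator `ĝ_θ(z) = (1/B) Σ_b u_θ(z_b)`. -/
noncomputable def batchEstimator {S A : Type*} [Fintype S] [Fintype A] [DecidableEq S]
    [DecidableEq A] {T B : ℕ} (γ lam : ℝ) (r : S → A → ℝ) (θ : S × A → ℝ)
    (z : Fin B → Fin T → S × A) : S × A → ℝ :=
  (1 / (B : ℝ)) • ∑ b, reinforce γ lam r θ (z b)

/-- The Euclidean norm on `ι → ℝ`. -/
noncomputable def eucNorm {ι : Type*} [Fintype ι] (u : ι → ℝ) : ℝ :=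
  Real.sqrt (∑ i, u i ^ 2)

/-!
The sum of two independent centred vectors satisfies
`E‖X + Y‖⁴ ≤ E‖X‖⁴ + 6 E‖X‖² E‖Y‖² + E‖Y‖⁴`: in the expansion of the fourth power the terms of odd
degree in `X` or in `Y` that survive Cauchy–Schwarz average to zero. Hence a sum of `n` i.i.d.
centred vectors has fourth moment at most `n E‖X‖⁴ + 3 n (n - 1) (E‖X‖²)²`, and the average of `n`
i.i.d. copies of a vector bounded by `K` has fourth central moment at most `4 K⁴ / n²`, because
centring costs a factor `4` in `E‖X‖⁴ ≤ (2K)² E‖X‖²` and nothing in `E‖X‖² ≤ K²`. A score has norm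
at most `√2`, so `∑ (t + 1) γ ^ t ≤ (1 - γ)⁻²` allows `K = √2 / (1 - γ)²`.
-/

section WeightedMean

variable {Ω Ω' E : Type*} [Fintype Ω] [Fintype Ω']

/-- The expectation of the vector `f` under the weights `w` on a finite sample space. The weights
need not be normalised; those of a probability distribution form the simplex `stdSimplex ℝ Ω`. -/
def weightedMean [AddCommMonoid E] [Module ℝ E] (w : Ω → ℝ) (f : Ω → E) : E :=
  ∑ x, w x • f x

section Linear

variable (w : Ω → ℝ)

theorem weightedMean_add [AddCommMonoid E] [Module ℝ E] (f g : Ω → E) :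
    weightedMean w (fun x => f x + g x) = weightedMean w f + weightedMean w g := by
  simp only [weightedMean, smul_add, Finset.sum_add_distrib]

theorem weightedMean_sub [AddCommGroup E] [Module ℝ E] (f g : Ω → E) :
    weightedMean w (fun x => f x - g x) = weightedMean w f - weightedMean w g := by
  simp only [weightedMean, smul_sub, Finset.sum_sub_distrib]

theorem weightedMean_const_mul (c : ℝ) (f : Ω → ℝ) :
    weightedMean w (fun x => c * f x) = c * weightedMean w f := by
  simp only [weightedMean, smul_eq_mul, mul_left_comm, Finset.mul_sum]

theorem weightedMean_mul_const (f : Ω → ℝ) (c : ℝ) :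
    weightedMean w (fun x => f x * c) = weightedMean w f * c := by
  simp only [weightedMean, smul_eq_mul, ← mul_assoc, Finset.sum_mul]

variable {w}

theorem weightedMean_const [AddCommMonoid E] [Module ℝ E] (hw : ∑ x, w x = 1) (v : E) :
    weightedMean w (fun _ => v) = v := by
  rw [weightedMean, ← Finset.sum_smul, hw, one_smul]

theorem weightedMean_sub_weightedMean [AddCommGroup E] [Module ℝ E] (hw : ∑ x, w x = 1)
    (f : Ω → E) : weightedMean w (fun x => f x - weightedMean w f) = 0 := by
  rw [weightedMean_sub, weightedMean_const hw, sub_self]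

theorem weightedMean_mono (hw : ∀ x, 0 ≤ w x) {f g : Ω → ℝ} (h : ∀ x, f x ≤ g x) :
    weightedMean w f ≤ weightedMean w g :=
  Finset.sum_le_sum fun x _ => mul_le_mul_of_nonneg_left (h x) (hw x)

end Linear

section Inner

variable [NormedAddCommGroup E] [InnerProductSpace ℝ E] {w : Ω → ℝ} {w' : Ω' → ℝ}

theorem weightedMean_inner_left (f : Ω → E) (v : E) :
    weightedMean w (fun x => inner ℝ (f x) v) = inner ℝ (weightedMean w f) v := by
  simp only [weightedMean, sum_inner, real_inner_smul_left, smul_eq_mul]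

theorem weightedMean_inner_right (v : E) (f : Ω → E) :
    weightedMean w (fun x => inner ℝ v (f x)) = inner ℝ v (weightedMean w f) := by
  simp only [weightedMean, inner_sum, real_inner_smul_right, smul_eq_mul]

theorem norm_weightedMean_le (hw : w ∈ stdSimplex ℝ Ω) {f : Ω → E} {K : ℝ}
    (hf : ∀ x, ‖f x‖ ≤ K) : ‖weightedMean w f‖ ≤ K :=
  mem_closedBall_zero_iff.mp <| (convex_closedBall (0 : E) K).sum_mem (fun x _ => hw.1 x) hw.2
    fun x _ => mem_closedBall_zero_iff.mpr (hf x)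

theorem weightedMean_norm_sub_weightedMean_sq (hw : ∑ x, w x = 1) (f : Ω → E) :
    weightedMean w (fun x => ‖f x - weightedMean w f‖ ^ 2) =
      weightedMean w (fun x => ‖f x‖ ^ 2) - ‖weightedMean w f‖ ^ 2 := by
  simp only [norm_sub_sq_real, weightedMean_add, weightedMean_sub, weightedMean_const_mul,
    weightedMean_inner_left, weightedMean_const hw, real_inner_self_eq_norm_sq]
  ring

theorem weightedMean_norm_sub_weightedMean_sq_le (hw : w ∈ stdSimplex ℝ Ω) {f : Ω → E} {K : ℝ}
    (hf : ∀ x, ‖f x‖ ≤ K) : weightedMean w (fun x => ‖f x - weightedMean w f‖ ^ 2) ≤ K ^ 2 :=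
  calc weightedMean w (fun x => ‖f x - weightedMean w f‖ ^ 2)
      ≤ weightedMean w (fun x => ‖f x‖ ^ 2) := by
        rw [weightedMean_norm_sub_weightedMean_sq hw.2]
        exact sub_le_self _ (sq_nonneg _)
    _ ≤ weightedMean w (fun _ => K ^ 2) :=
        weightedMean_mono hw.1 fun x => pow_le_pow_left₀ (norm_nonneg _) (hf x) 2
    _ = K ^ 2 := weightedMean_const hw.2 _

theorem weightedMean_norm_sub_weightedMean_pow_four_le (hw : w ∈ stdSimplex ℝ Ω) {f : Ω → E}
    {K : ℝ} (hf : ∀ x, ‖f x‖ ≤ K) :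
    weightedMean w (fun x => ‖f x - weightedMean w f‖ ^ 4) ≤ 4 * K ^ 4 := by
  have norm_sub_le_two_mul (x : Ω) : ‖f x - weightedMean w f‖ ≤ 2 * K :=
    (norm_sub_le _ _).trans (by linarith [hf x, norm_weightedMean_le hw hf])
  calc weightedMean w (fun x => ‖f x - weightedMean w f‖ ^ 4)
      ≤ weightedMean w (fun x => (2 * K) ^ 2 * ‖f x - weightedMean w f‖ ^ 2) := by
        refine weightedMean_mono hw.1 fun x => ?_
        rw [show 4 = 2 + 2 from rfl, pow_add]
        gcongr
        exact norm_sub_le_two_mul x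
    _ ≤ (2 * K) ^ 2 * K ^ 2 := by
        rw [weightedMean_const_mul]
        gcongr
        exact weightedMean_norm_sub_weightedMean_sq_le hw hf
    _ = 4 * K ^ 4 := by ring

theorem norm_add_pow_four_le (a b : E) :
    ‖a + b‖ ^ 4 ≤ ‖a‖ ^ 4 + 6 * (‖a‖ ^ 2 * ‖b‖ ^ 2) + ‖b‖ ^ 4
      + 4 * inner ℝ (‖a‖ ^ 2 • a) b + 4 * inner ℝ a (‖b‖ ^ 2 • b) := by
  have inner_sq_le : inner ℝ a b ^ 2 ≤ ‖a‖ ^ 2 * ‖b‖ ^ 2 := by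
    rw [← mul_pow]
    exact sq_le_sq.mpr ((abs_real_inner_le_norm a b).trans (le_abs_self _))
  have expansion : ‖a + b‖ ^ 4 = (‖a‖ ^ 2 + 2 * inner ℝ a b + ‖b‖ ^ 2) ^ 2 := by
    rw [← norm_add_sq_real]
    ring
  rw [expansion, real_inner_smul_left, real_inner_smul_right]
  linarith

section Independent

variable {X : Ω → E} {Y : Ω' → E}

theorem weightedMean_norm_add_sq (hw : ∑ x, w x = 1) (hw' : ∑ y, w' y = 1)
    (hY : weightedMean w' Y = 0) :
    weightedMean w (fun x => weightedMean w' fun y => ‖X x + Y y‖ ^ 2) =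
      weightedMean w (fun x => ‖X x‖ ^ 2) + weightedMean w' (fun y => ‖Y y‖ ^ 2) := by
  simp only [norm_add_sq_real, weightedMean_add, weightedMean_const_mul, weightedMean_inner_right,
    weightedMean_const hw, weightedMean_const hw', hY, inner_zero_right, mul_zero, add_zero]

theorem weightedMean_norm_add_pow_four_le (hw : w ∈ stdSimplex ℝ Ω) (hw' : w' ∈ stdSimplex ℝ Ω')
    (hX : weightedMean w X = 0) (hY : weightedMean w' Y = 0) :
    weightedMean w (fun x => weightedMean w' fun y => ‖X x + Y y‖ ^ 4) ≤
      weightedMean w (fun x => ‖X x‖ ^ 4)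
        + 6 * (weightedMean w (fun x => ‖X x‖ ^ 2) * weightedMean w' (fun y => ‖Y y‖ ^ 2))
        + weightedMean w' (fun y => ‖Y y‖ ^ 4) := by
  refine (weightedMean_mono hw.1 fun x =>
    weightedMean_mono hw'.1 fun y => norm_add_pow_four_le (X x) (Y y)).trans_eq ?_
  simp only [weightedMean_add, weightedMean_const_mul, weightedMean_mul_const,
    weightedMean_inner_left, weightedMean_inner_right, weightedMean_const hw.2,
    weightedMean_const hw'.2, hX, hY, inner_zero_left, inner_zero_right, mul_zero, add_zero]

end Independent

end Inner

end WeightedMean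

theorem sum_piFin_succ {Ω M : Type*} [Fintype Ω] [AddCommMonoid M] {n : ℕ}
    (f : (Fin (n + 1) → Ω) → M) :
    ∑ z, f z = ∑ x, ∑ z : Fin n → Ω, f (Fin.cons x z) := by
  rw [← (Fin.consEquiv fun _ => Ω).sum_comp, Fintype.sum_prod_type]
  rfl

section IID

variable {Ω E : Type*} [Fintype Ω]

/-- The product weights on `Ω ^ n`: the joint law of `n` independent samples from `w`. -/
def iidWeight (w : Ω → ℝ) (n : ℕ) (z : Fin n → Ω) : ℝ :=
  ∏ i, w (z i)

theorem sum_iidWeight {w : Ω → ℝ} (hw : ∑ x, w x = 1) (n : ℕ) : ∑ z, iidWeight w n z = 1 := by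
  simp only [iidWeight]
  rw [← Fintype.sum_pow, hw, one_pow]

theorem iidWeight_mem_stdSimplex {w : Ω → ℝ} (hw : w ∈ stdSimplex ℝ Ω) (n : ℕ) :
    iidWeight w n ∈ stdSimplex ℝ (Fin n → Ω) :=
  ⟨fun z => Finset.prod_nonneg fun i _ => hw.1 (z i), sum_iidWeight hw.2 n⟩

theorem weightedMean_iidWeight_zero [AddCommMonoid E] [Module ℝ E] (w : Ω → ℝ)
    (f : (Fin 0 → Ω) → E) : weightedMean (iidWeight w 0) f = f Fin.elim0 := by
  simp [weightedMean, iidWeight, Subsingleton.elim default Fin.elim0]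

theorem weightedMean_iidWeight_succ [AddCommMonoid E] [Module ℝ E] (w : Ω → ℝ) {n : ℕ}
    (f : (Fin (n + 1) → Ω) → E) :
    weightedMean (iidWeight w (n + 1)) f =
      weightedMean w fun x => weightedMean (iidWeight w n) fun z => f (Fin.cons x z) := by
  simp only [weightedMean, iidWeight, sum_piFin_succ, Fin.prod_univ_succ, Fin.cons_zero,
    Fin.cons_succ, mul_smul, Finset.smul_sum]

variable [NormedAddCommGroup E] [InnerProductSpace ℝ E] {w : Ω → ℝ} {X : Ω → E}

theorem weightedMean_iidWeight_sum_eq_zero (hw : ∑ x, w x = 1) (hX : weightedMean w X = 0)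
    (n : ℕ) : weightedMean (iidWeight w n) (fun z => ∑ i, X (z i)) = 0 := by
  induction n with
  | zero => simp [weightedMean_iidWeight_zero]
  | succ n ih =>
    simp only [weightedMean_iidWeight_succ, Fin.sum_univ_succ, Fin.cons_zero, Fin.cons_succ,
      weightedMean_add, weightedMean_const hw,
      weightedMean_const (sum_iidWeight hw n), hX, ih, add_zero]

theorem weightedMean_iidWeight_norm_sum_sq (hw : ∑ x, w x = 1) (hX : weightedMean w X = 0)
    (n : ℕ) :
    weightedMean (iidWeight w n) (fun z => ‖∑ i, X (z i)‖ ^ 2) =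
      n * weightedMean w (fun x => ‖X x‖ ^ 2) := by
  induction n with
  | zero => simp [weightedMean_iidWeight_zero]
  | succ n ih =>
    simp only [weightedMean_iidWeight_succ, Fin.sum_univ_succ, Fin.cons_zero, Fin.cons_succ]
    rw [weightedMean_norm_add_sq hw (sum_iidWeight hw n)
      (weightedMean_iidWeight_sum_eq_zero hw hX n), ih]
    push_cast
    ring

theorem weightedMean_iidWeight_norm_sum_pow_four_le (hw : w ∈ stdSimplex ℝ Ω)
    (hX : weightedMean w X = 0) (n : ℕ) :
    weightedMean (iidWeight w n) (fun z => ‖∑ i, X (z i)‖ ^ 4) ≤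
      n * weightedMean w (fun x => ‖X x‖ ^ 4)
        + 3 * (n * (n - 1)) * weightedMean w (fun x => ‖X x‖ ^ 2) ^ 2 := by
  induction n with
  | zero => simp [weightedMean_iidWeight_zero]
  | succ n ih =>
    simp only [weightedMean_iidWeight_succ, Fin.sum_univ_succ, Fin.cons_zero, Fin.cons_succ]
    refine (weightedMean_norm_add_pow_four_le hw (iidWeight_mem_stdSimplex hw n) hX
      (weightedMean_iidWeight_sum_eq_zero hw.2 hX n)).trans ?_
    rw [weightedMean_iidWeight_norm_sum_sq hw.2 hX]
    push_cast
    linarith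

theorem weightedMean_iidWeight_norm_sum_sub_pow_four_le {u : Ω → E} {K : ℝ}
    (hw : w ∈ stdSimplex ℝ Ω) (hu : ∀ x, ‖u x‖ ≤ K) (n : ℕ) :
    weightedMean (iidWeight w n) (fun z => ‖∑ i, (u (z i) - weightedMean w u)‖ ^ 4) ≤
      4 * n ^ 2 * K ^ 4 := by
  have mul_pred_nonneg : (0 : ℝ) ≤ n * (n - 1) := by
    rcases n with _ | m
    · simp
    · push_cast
      rw [add_sub_cancel_right]
      positivity
  set σsq := weightedMean w fun x => ‖u x - weightedMean w u‖ ^ 2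
  have σsq_nonneg : 0 ≤ σsq := Finset.sum_nonneg fun x _ => smul_nonneg (hw.1 x) (sq_nonneg _)
  have σsq_sq_le : σsq ^ 2 ≤ K ^ 4 := by
    rw [show 4 = 2 * 2 from rfl, pow_mul]
    exact pow_le_pow_left₀ σsq_nonneg (weightedMean_norm_sub_weightedMean_sq_le hw hu) 2
  calc weightedMean (iidWeight w n) (fun z => ‖∑ i, (u (z i) - weightedMean w u)‖ ^ 4)
      ≤ n * weightedMean w (fun x => ‖u x - weightedMean w u‖ ^ 4)
          + 3 * (n * (n - 1)) * σsq ^ 2 :=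
        weightedMean_iidWeight_norm_sum_pow_four_le hw (weightedMean_sub_weightedMean hw.2 u) n
    _ ≤ n * (4 * K ^ 4) + 3 * (n * (n - 1)) * K ^ 4 := by
        gcongr
        exact weightedMean_norm_sub_weightedMean_pow_four_le hw hu
    _ ≤ 4 * n ^ 2 * K ^ 4 := by
        have : 0 ≤ (n : ℝ) * (n - 1) * K ^ 4 := by positivity
        linarith

theorem weightedMean_iidWeight_norm_average_sub_pow_four_le {u : Ω → E} {K : ℝ}
    (hw : w ∈ stdSimplex ℝ Ω) (hu : ∀ x, ‖u x‖ ≤ K) {n : ℕ} (hn : 1 ≤ n) :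
    weightedMean (iidWeight w n)
        (fun z => ‖(1 / (n : ℝ)) • ∑ i, u (z i) - weightedMean w u‖ ^ 4) ≤
      4 * K ^ 4 / n ^ 2 := by
  have n_pos : (0 : ℝ) < n := mod_cast hn
  have average_sub (z : Fin n → Ω) : (1 / (n : ℝ)) • ∑ i, u (z i) - weightedMean w u =
      (1 / (n : ℝ)) • ∑ i, (u (z i) - weightedMean w u) := by
    rw [Finset.sum_sub_distrib, smul_sub, Finset.sum_const, Finset.card_univ, Fintype.card_fin,
      ← Nat.cast_smul_eq_nsmul ℝ, smul_smul, one_div_mul_cancel n_pos.ne', one_smul]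
  simp only [average_sub, norm_smul, mul_pow, weightedMean_const_mul]
  calc ‖1 / (n : ℝ)‖ ^ 4 *
        weightedMean (iidWeight w n) (fun z => ‖∑ i, (u (z i) - weightedMean w u)‖ ^ 4)
      ≤ ‖1 / (n : ℝ)‖ ^ 4 * (4 * n ^ 2 * K ^ 4) := by
        gcongr
        exact weightedMean_iidWeight_norm_sum_sub_pow_four_le hw hu n
    _ = 4 * K ^ 4 / n ^ 2 := by
        rw [Real.norm_of_nonneg (by positivity)]
        field_simp

end IID

section Discounted

theorem sum_add_one_mul_pow_le {γ : ℝ} (hγ0 : 0 ≤ γ) (hγ1 : γ < 1) (T : ℕ) :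
    ∑ t : Fin T, ((t : ℕ) + 1 : ℝ) * γ ^ (t : ℕ) ≤ 1 / (1 - γ) ^ 2 := by
  have hasSum : HasSum (fun t : ℕ => ((t : ℝ) + 1) * γ ^ t) (1 / (1 - γ) ^ 2) := by
    simpa only [Nat.choose_one_right, Nat.cast_add_one, one_add_one_eq_two] using
      hasSum_choose_mul_geometric_of_norm_lt_one 1 (by rwa [Real.norm_of_nonneg hγ0])
  rw [Fin.sum_univ_eq_sum_range fun t : ℕ => ((t : ℝ) + 1) * γ ^ t]
  exact sum_le_hasSum _ (fun t _ => by positivity) hasSum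

variable {E : Type*} [SeminormedAddCommGroup E] {T : ℕ} {f : Fin T → E} {C : ℝ}

theorem norm_sum_ite_le_mul_add_one (hf : ∀ l, ‖f l‖ ≤ C) (t : Fin T) :
    ‖∑ l : Fin T, if (l : ℕ) ≤ (t : ℕ) then f l else 0‖ ≤ C * ((t : ℕ) + 1) := by
  have filter_eq_Iic : (Finset.univ.filter fun l : Fin T => (l : ℕ) ≤ t) = Finset.Iic t := by
    ext l
    simp
  rw [← Finset.sum_filter, filter_eq_Iic]
  refine (norm_sum_le_of_le _ fun l _ => hf l).trans_eq ?_
  rw [Finset.sum_const, Fin.card_Iic, nsmul_eq_mul, mul_comm]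
  push_cast
  rfl

theorem norm_sum_discounted_sum_le [NormedSpace ℝ E] {γ : ℝ} (hγ0 : 0 ≤ γ) (hγ1 : γ < 1)
    (hC : 0 ≤ C) (hf : ∀ l, ‖f l‖ ≤ C) {R : ℝ} (hR : 0 ≤ R) {c : Fin T → ℝ}
    (hc : ∀ t, |c t| ≤ R) :
    ‖∑ t : Fin T, (γ ^ (t : ℕ) * c t) • ∑ l : Fin T, if (l : ℕ) ≤ (t : ℕ) then f l else 0‖ ≤
      R * C / (1 - γ) ^ 2 := by
  have term_le (t : Fin T) :
      ‖(γ ^ (t : ℕ) * c t) • ∑ l : Fin T, if (l : ℕ) ≤ (t : ℕ) then f l else 0‖ ≤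
        R * C * (((t : ℕ) + 1) * γ ^ (t : ℕ)) :=
    calc _ = γ ^ (t : ℕ) * |c t| * ‖∑ l : Fin T, if (l : ℕ) ≤ (t : ℕ) then f l else 0‖ := by
          rw [norm_smul, Real.norm_eq_abs, abs_mul, abs_of_nonneg (pow_nonneg hγ0 _)]
      _ ≤ γ ^ (t : ℕ) * R * (C * ((t : ℕ) + 1)) := by
          gcongr
          exacts [hc t, norm_sum_ite_le_mul_add_one hf t]
      _ = R * C * (((t : ℕ) + 1) * γ ^ (t : ℕ)) := by ring
  refine (norm_sum_le_of_le _ fun t _ => term_le t).trans ?_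
  rw [← Finset.mul_sum, div_eq_mul_one_div]
  exact mul_le_mul_of_nonneg_left (sum_add_one_mul_pow_le hγ0 hγ1 T) (mul_nonneg hR hC)

end Discounted

theorem eucNorm_eq_norm_toLp {ι : Type*} [Fintype ι] (u : ι → ℝ) :
    eucNorm u = ‖WithLp.toLp 2 u‖ := by
  simp [eucNorm, EuclideanSpace.norm_eq]

section Reinforce

variable {S A : Type*} [Fintype A] (θ : S × A → ℝ)

theorem trajDist_cons {T : ℕ} (P : S → A → S → ℝ) (ρ : S → ℝ) (p : S × A) (z : Fin T → S × A) :
    trajDist P ρ θ (Fin.cons p z : Fin (T + 1) → S × A) =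
      ρ p.1 * softmax θ p.1 p.2 * trajDist P (P p.1 p.2) θ z := by
  simp only [trajDist, Fin.prod_univ_succ]
  congr 1
  refine Finset.prod_congr rfl fun t _ => ?_
  rcases t with ⟨_ | k, hk⟩ <;> rfl

variable [Nonempty A]

theorem softmax_mem_stdSimplex (s : S) : softmax θ s ∈ stdSimplex ℝ A := by
  refine ⟨fun a => by unfold softmax; positivity, ?_⟩
  simp only [softmax]
  rw [← Finset.sum_div]
  exact div_self (Finset.sum_pos (fun a _ => Real.exp_pos _) Finset.univ_nonempty).ne'

theorem sum_score_sq_le [Fintype S] [DecidableEq S] [DecidableEq A] (s : S) (a : A) :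
    ∑ p, score θ s a p ^ 2 ≤ 2 := by
  have score_sq_le (p : S × A) : score θ s a p ^ 2 ≤
      if p.1 = s then (if p.2 = a then (1 : ℝ) else 0) + softmax θ p.1 p.2 else 0 := by
    obtain ⟨softmax_nonneg, softmax_le_one⟩ :=
      mem_Icc_of_mem_stdSimplex (softmax_mem_stdSimplex θ p.1) p.2
    unfold score
    split_ifs <;> nlinarith
  calc ∑ p, score θ s a p ^ 2
      ≤ ∑ p : S × A,
          if p.1 = s then (if p.2 = a then (1 : ℝ) else 0) + softmax θ p.1 p.2 else 0 :=
        Finset.sum_le_sum fun p _ => score_sq_le p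
    _ = 1 + ∑ a', softmax θ s a' := by
        simp [Fintype.sum_prod_type_right, Finset.sum_add_distrib]
    _ = 2 := by
        rw [(softmax_mem_stdSimplex θ s).2]
        norm_num

theorem norm_toLp_score_le [Fintype S] [DecidableEq S] [DecidableEq A] (s : S) (a : A) :
    ‖WithLp.toLp 2 (score θ s a)‖ ≤ √2 := by
  rw [← eucNorm_eq_norm_toLp]
  exact Real.sqrt_le_sqrt (sum_score_sq_le θ s a)

theorem norm_toLp_reinforce_le [Fintype S] [Nonempty S] [DecidableEq S] [DecidableEq A] {T : ℕ}
    {γ lam R : ℝ} (hγ0 : 0 ≤ γ) (hγ1 : γ < 1) {r : S → A → ℝ}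
    (hr : ∀ s a, |r s a - lam * Real.log (softmax θ s a)| ≤ R) (z : Fin T → S × A) :
    ‖WithLp.toLp 2 (reinforce γ lam r θ z)‖ ≤ R * √2 / (1 - γ) ^ 2 := by
  have R_nonneg : 0 ≤ R := (abs_nonneg _).trans (hr (Classical.arbitrary S) (Classical.arbitrary A))
  simp only [reinforce, WithLp.toLp_sum, WithLp.toLp_smul, apply_ite (WithLp.toLp 2),
    WithLp.toLp_zero]
  exact norm_sum_discounted_sum_le hγ0 hγ1 (Real.sqrt_nonneg 2)
    (fun l => norm_toLp_score_le θ _ _) R_nonneg fun t => hr _ _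

variable [Fintype S] {P : S → A → S → ℝ} {ρ : S → ℝ}

theorem trajDist_mem_stdSimplex (hP : ∀ s a, P s a ∈ stdSimplex ℝ S) (hρ : ρ ∈ stdSimplex ℝ S)
    (T : ℕ) : (trajDist P ρ θ : (Fin T → S × A) → ℝ) ∈ stdSimplex ℝ (Fin T → S × A) := by
  induction T generalizing ρ with
  | zero => simp [stdSimplex, trajDist]
  | succ T ih =>
    refine ⟨fun z => ?_, ?_⟩
    · rw [← Fin.cons_self_tail z, trajDist_cons]
      exact mul_nonneg (mul_nonneg (hρ.1 _) ((softmax_mem_stdSimplex θ _).1 _))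
        ((ih (hP _ _)).1 _)
    · simp only [sum_piFin_succ, trajDist_cons, ← Finset.mul_sum, (ih (hP _ _)).2, mul_one,
        Fintype.sum_prod_type, (softmax_mem_stdSimplex θ _).2, hρ.2]

end Reinforce

theorem stmt11_general {S A : Type*} [Fintype S] [Fintype A] [Nonempty S] [Nonempty A]
    [DecidableEq S] [DecidableEq A] {T B : ℕ} (hB : 1 ≤ B)
    {γ lam R : ℝ} (hγ0 : 0 ≤ γ) (hγ1 : γ < 1)
    {P : S → A → S → ℝ} (hP : ∀ s a, P s a ∈ stdSimplex ℝ S)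
    {ρ : S → ℝ} (hρ : ρ ∈ stdSimplex ℝ S) {r : S → A → ℝ} {θ : S × A → ℝ}
    (hr : ∀ s a, |r s a - lam * Real.log (softmax θ s a)| ≤ R) :
    ∑ z : Fin B → Fin T → S × A,
        (∏ b, trajDist P ρ θ (z b)) *
          (eucNorm (batchEstimator γ lam r θ z -
            ∑ z' : Fin T → S × A, trajDist P ρ θ z' • reinforce γ lam r θ z')) ^ 4
      ≤ 16 * R ^ 4 / ((B : ℝ) ^ 2 * (1 - γ) ^ 8) := by
  have bound := weightedMean_iidWeight_norm_average_sub_pow_four_le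
    (trajDist_mem_stdSimplex θ hP hρ T) (norm_toLp_reinforce_le θ hγ0 hγ1 hr) hB
  simp only [eucNorm_eq_norm_toLp, batchEstimator, WithLp.toLp_sub, WithLp.toLp_smul,
    WithLp.toLp_sum]
  refine bound.trans_eq ?_
  have sqrt_two_pow_four : √2 ^ 4 = (4 : ℝ) := by
    rw [show 4 = 2 * 2 from rfl, pow_mul, Real.sq_sqrt zero_le_two]
    norm_num
  rw [div_pow, mul_pow, sqrt_two_pow_four, ← pow_mul, ← mul_div_assoc, div_div]
  congr 1 <;> ring

/-- Fourth central moment bound for the unregularized (`λ = 0`) batch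
REINFORCE estimator under the truncated-trajectory distribution. -/
theorem stmt11 {S A : Type*} [Fintype S] [Fintype A] [Nonempty S] [Nonempty A]
    [DecidableEq S] [DecidableEq A]
    (T B : ℕ) (hT : 1 ≤ T) (hB : 1 ≤ B)
    (γ : ℝ) (hγ0 : 0 ≤ γ) (hγ1 : γ < 1)
    (P : S → A → S → ℝ) (hP : ∀ s a, (∀ s', 0 ≤ P s a s') ∧ ∑ s', P s a s' = 1)
    (ρ : S → ℝ) (hρ0 : ∀ s, 0 ≤ ρ s) (hρ1 : ∑ s, ρ s = 1)
    (r : S → A → ℝ) (hr : ∀ s a, 0 ≤ r s a ∧ r s a ≤ 1)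
    (θ : S × A → ℝ) :
    ∑ z : Fin B → Fin T → S × A,
        (∏ b, trajDist P ρ θ (z b)) *
          (eucNorm (batchEstimator γ 0 r θ z -
            ∑ z' : Fin T → S × A, trajDist P ρ θ z' • reinforce γ 0 r θ z')) ^ 4
      ≤ 1120 / ((B : ℝ) ^ 2 * (1 - γ) ^ 8) := by
  refine (stmt11_general hB hγ0 hγ1 hP ⟨hρ0, hρ1⟩ (lam := 0) (R := 1) fun s a => by
    simpa [abs_of_nonneg (hr s a).1] using (hr s a).2).trans ?_
  have : 0 < 1 - γ := sub_pos.mpr hγ1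
  gcongr
  norm_num
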